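/- arXiv:2503.19181 — 10 statements merged into one kernel-verified Lean document; each statement's English description precedes it below -/
import Mathlib

section
/- Let τ, τ' : E → F be matroid homomorphisms between binary matroids E ⊆ (Fin m → ZMod 2) and F ⊆ (Fin k → ZMod 2), and let C be a cocircuit of E. The following are equivalent: (1) for every e ∈ E, τ(e) ≠ τ'(e) if and only if e ∈ C; (2) there exists a nonzero vector c ∈ (Fin k → ZMod 2) such that τ'(e) = τ(e) + c for all e ∈ C and τ'(e) = τ(e) for all e ∉ C. -/
/-- A circuit of a binary matroid with point set `E`: a minimal nonempty subset summing to 0. -/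
def IsCircuit {P : Type*} [AddCommGroup P] (E Z : Finset P) : Prop :=
  Z ⊆ E ∧ Z.Nonempty ∧ ∑ e ∈ Z, e = 0 ∧
    ∀ Z' ⊆ Z, Z'.Nonempty → ∑ e ∈ Z', e = 0 → Z' = Z

/-- A cocircuit: a minimal nonempty subset meeting every circuit evenly. -/
def IsCocircuit {P : Type*} [AddCommGroup P] [DecidableEq P] (E C : Finset P) : Prop :=
  C ⊆ E ∧ C.Nonempty ∧ (∀ Z, IsCircuit E Z → Even (C ∩ Z).card) ∧
    ∀ C' ⊆ C, C'.Nonempty → (∀ Z, IsCircuit E Z → Even (C' ∩ Z).card) → C' = C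

/-- A matroid homomorphism from the matroid on `E` to the matroid on `F`. -/
def IsMHom {P Q : Type*} [AddCommGroup P] [AddCommGroup Q]
    (E : Finset P) (F : Finset Q) (τ : P → Q) : Prop :=
  (∀ e ∈ E, τ e ∈ F) ∧ ∀ Z, IsCircuit E Z → ∑ e ∈ Z, τ e = 0

/-- Adjacency in the recolouring graph: the maps differ exactly on a cocircuit. -/
def MAdj {P Q : Type*} [AddCommGroup P] [AddCommGroup Q] [DecidableEq P]
    (E : Finset P) (τ τ' : P → Q) : Prop :=
  ∃ C, IsCocircuit E C ∧ ∀ e ∈ E, (τ e ≠ τ' e ↔ e ∈ C)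

/-- One step of a walk in `mCol(E,F)`: both maps are homomorphisms and they are
equal (as maps on `E`) or adjacent. -/
def MStep {P Q : Type*} [AddCommGroup P] [AddCommGroup Q] [DecidableEq P]
    (E : Finset P) (F : Finset Q) (τ τ' : P → Q) : Prop :=
  IsMHom E F τ ∧ IsMHom E F τ' ∧ ((∀ e ∈ E, τ e = τ' e) ∨ MAdj E τ τ')

/-- Joined by a walk in the recolouring graph `mCol(E,F)`. -/
def MWalk {P Q : Type*} [AddCommGroup P] [AddCommGroup Q] [DecidableEq P]
    (E : Finset P) (F : Finset Q) : (P → Q) → (P → Q) → Prop :=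
  Relation.ReflTransGen (MStep E F)

/-- The indicator vector of a vertex. -/
def ind {V : Type*} [DecidableEq V] (u : V) : V → ZMod 2 := Pi.single u 1

/-- The decision graph of a set `F` of nonzero vectors. -/
def decisionGraph {m : ℕ} (F : Finset (Fin m → ZMod 2)) : SimpleGraph (Fin m → ZMod 2) where
  Adj v w := v + w ∈ F ∧ v ≠ w
  symm := by
    constructor
    intro v w h
    exact ⟨by rw [add_comm]; exact h.1, h.2.symm⟩
  loopless := by
    constructor
    intro v h
    exact h.2 rfl

/-- The weight of a vector: its number of nonzero coordinates. -/
def wt {n : ℕ} (e : Fin n → ZMod 2) : ℕ := (Finset.univ.filter fun i => e i ≠ 0).card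


theorem stmt1 (m k : ℕ) (E : Finset (Fin m → ZMod 2)) (F : Finset (Fin k → ZMod 2))
    (τ τ' : (Fin m → ZMod 2) → (Fin k → ZMod 2))
    (hτ : IsMHom E F τ) (hτ' : IsMHom E F τ')
    (C : Finset (Fin m → ZMod 2)) (hC : IsCocircuit E C) :
    (∀ e ∈ E, (τ e ≠ τ' e ↔ e ∈ C)) ↔
      (∃ c : Fin k → ZMod 2, c ≠ 0 ∧ (∀ e ∈ C, τ' e = τ e + c) ∧
        ∀ e ∈ E, e ∉ C → τ' e = τ e) := by
  obtain ⟨hCE, ⟨a, ha⟩, -, hmin⟩ := hC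
  constructor
  · intro h
    have key : ∀ i, ∀ e ∈ C, (τ' e - τ e) i = (τ' a - τ a) i := by
      intro i
      have hev : ∀ Z, IsCircuit E Z →
          Even ((C.filter fun e => (τ' e - τ e) i = 1) ∩ Z).card := by
        intro Z hZ
        have h1 : ∑ e ∈ Z, (τ' e - τ e) i = 0 := by
          rw [← Finset.sum_apply, Finset.sum_sub_distrib, hτ.2 Z hZ, hτ'.2 Z hZ]
          simp
        rw [← ZMod.natCast_eq_zero_iff_even, ← h1, Finset.card_eq_sum_ones, Nat.cast_sum]
        have h2 : (C.filter fun e => (τ' e - τ e) i = 1) ∩ Z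
            = Z.filter fun e => (τ' e - τ e) i = 1 := by
          ext e
          simp only [Finset.mem_inter, Finset.mem_filter]
          constructor
          · rintro ⟨⟨_, h3⟩, h4⟩
            exact ⟨h4, h3⟩
          · rintro ⟨h4, h3⟩
            refine ⟨⟨(h e (hZ.1 h4)).1 ?_, h3⟩, h4⟩
            intro h5
            simp [h5] at h3
        rw [h2, Finset.sum_filter]
        refine Finset.sum_congr rfl fun e _ => ?_
        generalize (τ' e - τ e) i = x
        revert x
        decide
      have h01 : ∀ x : ZMod 2, x ≠ 1 → x = 0 := by decide
      rcases (C.filter fun e => (τ' e - τ e) i = 1).eq_empty_or_nonempty with h0 | h0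
      · rw [Finset.filter_eq_empty_iff] at h0
        intro e he
        rw [h01 _ (h0 he), h01 _ (h0 ha)]
      · have h1 := hmin _ (Finset.filter_subset _ _) h0 hev
        rw [Finset.filter_eq_self] at h1
        intro e he
        rw [h1 e he, h1 a ha]
    refine ⟨τ' a - τ a, ?_, ?_, ?_⟩
    · intro h0
      exact (h a (hCE ha)).2 ha (sub_eq_zero.1 h0).symm
    · intro e he
      rw [← funext fun i => key i e he]
      simp
    · intro e he hn
      by_contra h1
      exact hn ((h e he).1 (Ne.symm h1))
  · rintro ⟨c, hc, h1, h2⟩ e he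
    constructor
    · intro h3
      by_contra h4
      exact h3 (h2 e he h4).symm
    · intro h3 h4
      have := h1 e h3
      rw [← h4] at this
      exact hc (by simpa using this)
end

section
/- Let τ : E → F be a matroid homomorphism between binary matroids E ⊆ (Fin m → ZMod 2) and F ⊆ (Fin k → ZMod 2), let C be a cocircuit of E, and let c ∈ (Fin k → ZMod 2) be a vector such that τ(e) + c ∈ F for every e ∈ C. Then the map τ' defined by τ'(e) = τ(e) + c for e ∈ C and τ'(e) = τ(e) for e ∉ C is a matroid homomorphism from E to F; moreover, if c ≠ 0 then τ' is adjacent to τ in the recolouring graph mCol(E, F). -/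
theorem stmt2 (m k : ℕ) (E : Finset (Fin m → ZMod 2)) (F : Finset (Fin k → ZMod 2))
    (τ : (Fin m → ZMod 2) → (Fin k → ZMod 2)) (hτ : IsMHom E F τ)
    (C : Finset (Fin m → ZMod 2)) (hC : IsCocircuit E C)
    (c : Fin k → ZMod 2) (hc : ∀ e ∈ C, τ e + c ∈ F) :
    IsMHom E F (fun e => if e ∈ C then τ e + c else τ e) ∧
      (c ≠ 0 → MAdj E τ (fun e => if e ∈ C then τ e + c else τ e)) := by
  constructor
  · refine ⟨fun e he => ?_, fun Z hZ => ?_⟩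
    · by_cases h : e ∈ C
      · simpa [h] using hc e h
      · simpa [h] using hτ.1 e he
    · have h1 : ∀ e ∈ Z, (if e ∈ C then τ e + c else τ e) = τ e + (if e ∈ C then c else 0) := by
        intro e _
        split_ifs <;> simp
      show ∑ e ∈ Z, (if e ∈ C then τ e + c else τ e) = 0
      rw [Finset.sum_congr rfl h1, Finset.sum_add_distrib, hτ.2 Z hZ, zero_add,
        Finset.sum_ite_mem, Finset.sum_const, Finset.inter_comm]
      obtain ⟨r, hr⟩ := hC.2.2.1 Z hZ
      rw [hr, add_nsmul]
      funext i
      exact CharTwo.add_self_eq_zero (R := ZMod 2) _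
  · intro hc0
    refine ⟨C, hC, fun e _ => ?_⟩
    by_cases h : e ∈ C <;> simp [h, hc0]
end

section
/- Let E ⊆ (Fin m → ZMod 2) be a simple binary matroid, let t ≥ 0, and let F be the set of all vectors of (Fin t → ZMod 2) (the point set of the looped projective geometry PG^ℓ(t,2)). Then any two matroid homomorphisms τ, σ : E → F are joined by a walk in the recolouring graph mCol(E, F); that is, mCol(E, F) is connected. -/
def CoEven {P : Type*} [AddCommGroup P] [DecidableEq P] (E C : Finset P) : Prop :=
  ∀ Z, IsCircuit E Z → Even (C ∩ Z).card

def shiftOn {P Q : Type*} [AddCommGroup Q] [DecidableEq P] (D : Finset P) (v : Q)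
    (τ : P → Q) : P → Q := fun e => τ e + if e ∈ D then v else 0

theorem shiftOn_hom {P : Type*} [AddCommGroup P] [DecidableEq P] {t : ℕ} {E D : Finset P}
    (hD : CoEven E D) (v : Fin t → ZMod 2) {τ : P → (Fin t → ZMod 2)}
    (hτ : IsMHom E Finset.univ τ) : IsMHom E Finset.univ (shiftOn D v τ) := by
  refine ⟨fun _ _ => Finset.mem_univ _, fun Z hZ => ?_⟩
  unfold shiftOn
  rw [Finset.sum_add_distrib, hτ.2 Z hZ, zero_add, Finset.sum_ite_mem, Finset.sum_const,
    Finset.inter_comm]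
  obtain ⟨k, hk⟩ := hD Z hZ
  rw [hk, add_nsmul]
  funext i
  exact CharTwo.add_self_eq_zero _

theorem exists_cocircuit {P : Type*} [AddCommGroup P] [DecidableEq P] {E : Finset P} :
    ∀ (n : ℕ) (D : Finset P), D.card = n → D ⊆ E → D.Nonempty → CoEven E D →
    ∃ C ⊆ D, IsCocircuit E C := by
  intro n
  induction n using Nat.strong_induction_on with
  | _ n ih =>
    intro D hn hDE hne hD
    by_cases h : ∀ C' ⊆ D, C'.Nonempty → (∀ Z, IsCircuit E Z → Even (C' ∩ Z).card) → C' = D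
    · exact ⟨D, subset_rfl, hDE, hne, hD, h⟩
    · push Not at h
      obtain ⟨C', h1, h2, h3, h4⟩ := h
      have hlt : C'.card < n := hn ▸ Finset.card_lt_card (lt_of_le_of_ne h1 h4)
      obtain ⟨C, hC, hC'⟩ := ih _ hlt C' rfl (h1.trans hDE) h2 h3
      exact ⟨C, hC.trans h1, hC'⟩

theorem walk_shiftOn {P : Type*} [AddCommGroup P] [DecidableEq P] {t : ℕ} {E : Finset P}
    (v : Fin t → ZMod 2) (hv : v ≠ 0) :
    ∀ (n : ℕ) (D : Finset P), D.card = n → D ⊆ E → CoEven E D →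
    ∀ τ : P → (Fin t → ZMod 2), IsMHom E Finset.univ τ →
      MWalk E Finset.univ τ (shiftOn D v τ) := by
  intro n
  induction n using Nat.strong_induction_on with
  | _ n ih =>
    intro D hn hDE hD τ hτ
    rcases D.eq_empty_or_nonempty with rfl | hne
    · have : shiftOn ∅ v τ = τ := by funext e; simp [shiftOn]
      rw [this]
      exact Relation.ReflTransGen.refl
    · obtain ⟨C, hCD, hC⟩ := exists_cocircuit _ D rfl hDE hne hD
      have hτ1 : IsMHom E Finset.univ (shiftOn C v τ) := shiftOn_hom hC.2.2.1 v hτ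
      have hlt : (D \ C).card < n := by
        rw [← hn]
        exact Finset.card_lt_card (Finset.sdiff_ssubset hCD hC.2.1)
      have hev : CoEven E (D \ C) := by
        intro Z hZ
        have h1 := hD Z hZ
        have h2 := hC.2.2.1 Z hZ
        have h3 : (D ∩ Z).card = (C ∩ Z).card + ((D \ C) ∩ Z).card := by
          rw [← Finset.card_union_of_disjoint]
          · congr 1
            ext x
            have := @hCD x
            simp only [Finset.mem_inter, Finset.mem_union, Finset.mem_sdiff]
            tauto
          · rw [Finset.disjoint_left]
            intro x
            simp only [Finset.mem_inter, Finset.mem_sdiff]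
            tauto
        rw [h3, Nat.even_add] at h1
        exact h1.1 h2
      have hw := ih _ hlt (D \ C) rfl (Finset.sdiff_subset.trans hDE) hev _ hτ1
      have heq : shiftOn (D \ C) v (shiftOn C v τ) = shiftOn D v τ := by
        funext e
        have := @hCD e
        by_cases h1 : e ∈ C
        · simp [shiftOn, h1, this h1]
        · simp [shiftOn, h1]
      rw [heq] at hw
      refine Relation.ReflTransGen.head ⟨hτ, hτ1, Or.inr ⟨C, hC, fun e _ => ?_⟩⟩ hw
      by_cases h1 : e ∈ C <;> simp [shiftOn, h1, hv]

theorem mix_hom {P : Type*} [AddCommGroup P] {t : ℕ} {E : Finset P}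
    {τ σ : P → (Fin t → ZMod 2)} (hτ : IsMHom E Finset.univ τ) (hσ : IsMHom E Finset.univ σ)
    (s : Finset (Fin t)) :
    IsMHom E Finset.univ (fun e => fun i => if i ∈ s then σ e i else τ e i) := by
  refine ⟨fun _ _ => Finset.mem_univ _, fun Z hZ => ?_⟩
  funext i
  have h1 := congrFun (hτ.2 Z hZ) i
  have h2 := congrFun (hσ.2 Z hZ) i
  rw [Finset.sum_apply] at h1 h2 ⊢
  by_cases h : i ∈ s
  · simpa only [if_pos h] using h2
  · simpa only [if_neg h] using h1

theorem stmt3 (m t : ℕ) (E : Finset (Fin m → ZMod 2)) (hE : ∀ e ∈ E, e ≠ 0)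
    (τ σ : (Fin m → ZMod 2) → (Fin t → ZMod 2))
    (hτ : IsMHom E (Finset.univ : Finset (Fin t → ZMod 2)) τ)
    (hσ : IsMHom E (Finset.univ : Finset (Fin t → ZMod 2)) σ) :
    MWalk E (Finset.univ : Finset (Fin t → ZMod 2)) τ σ := by
  have key : ∀ s : Finset (Fin t), MWalk E (Finset.univ : Finset (Fin t → ZMod 2)) τ
      (fun e => fun i => if i ∈ s then σ e i else τ e i) := by
    intro s
    induction s using Finset.induction_on with
    | empty => simp only [Finset.notMem_empty, if_false]; exact Relation.ReflTransGen.refl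
    | insert i s hi ih =>
      have hD : CoEven E (E.filter fun e => τ e i ≠ σ e i) := by
        intro Z hZ
        have h1 := congrFun (hτ.2 Z hZ) i
        have h2 := congrFun (hσ.2 Z hZ) i
        rw [Finset.sum_apply] at h1 h2
        rw [← ZMod.natCast_eq_zero_iff_even]
        have h4 : E.filter (fun e => τ e i ≠ σ e i) ∩ Z
            = Z.filter (fun e => τ e i ≠ σ e i) := by
          ext x
          have := @hZ.1 x
          simp only [Finset.mem_inter, Finset.mem_filter]
          tauto
        rw [h4, Finset.natCast_card_filter]
        have h3 : ∀ a b : ZMod 2, (if a ≠ b then (1 : ZMod 2) else 0) = a + b := by decide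
        simp only [h3]
        rw [Finset.sum_add_distrib, h1, h2]
        rfl
      have hw := walk_shiftOn (Pi.single i 1 : Fin t → ZMod 2) (by simp) _ _ rfl
        (Finset.filter_subset _ E) hD _ (mix_hom hτ hσ s)
      refine (ih.trans hw).tail
        ⟨shiftOn_hom hD _ (mix_hom hτ hσ s), mix_hom hτ hσ (insert i s), Or.inl ?_⟩
      intro e he
      funext j
      by_cases hj : j = i
      · subst hj
        have h3 : ∀ a b : ZMod 2, a ≠ b → a + 1 = b := by decide
        by_cases h : τ e j = σ e j
        · simp [shiftOn, h]
        · simp [shiftOn, h, he, hi, h3 _ _ h]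
      · by_cases h : τ e i = σ e i <;> simp [shiftOn, h, he, hj]
  simpa using key Finset.univ
end

section
/- Let L ⊆ (Fin l → ZMod 2), M ⊆ (Fin m → ZMod 2), and N ⊆ (Fin k → ZMod 2) be binary matroids, let α, α' : L → M be matroid homomorphisms that are adjacent in the recolouring graph mCol(L, M), and let β : M → N be a matroid homomorphism. Then β ∘ α and β ∘ α' are either equal or adjacent in mCol(L, N). -/
theorem aux_cycle {P Q : Type*} [AddCommGroup P] [AddCommGroup Q] [DecidableEq P]
    (E : Finset P) (τ : P → Q) (h : ∀ Z, IsCircuit E Z → ∑ e ∈ Z, τ e = 0) :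
    ∀ W : Finset P, W ⊆ E → ∑ e ∈ W, e = 0 → ∑ e ∈ W, τ e = 0 := by
  intro W
  induction W using Finset.strongInduction with
  | H W ih =>
    intro hW h0
    by_cases hne : W.Nonempty
    · by_cases hc : IsCircuit E W
      · exact h W hc
      · have : ∃ Z' ⊆ W, Z'.Nonempty ∧ ∑ e ∈ Z', e = 0 ∧ Z' ≠ W := by
          by_contra hcon
          apply hc
          refine ⟨hW, hne, h0, fun Z' h1 h2 h3 => ?_⟩
          by_contra h4
          exact hcon ⟨Z', h1, h2, h3, h4⟩
        obtain ⟨Z, h1, h2, h3, h4⟩ := this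
        have e1 := Finset.sum_sdiff (f := fun e => e) h1
        have e2 := Finset.sum_sdiff (f := τ) h1
        have h5 : ∑ e ∈ W \ Z, e = 0 := by
          rw [h3, h0, add_zero] at e1
          exact e1
        rw [← e2, ih Z (Finset.ssubset_iff_subset_ne.2 ⟨h1, h4⟩) (h1.trans hW) h3,
          ih (W \ Z) (Finset.sdiff_ssubset h1 h2) (Finset.sdiff_subset.trans hW) h5, add_zero]
    · rw [Finset.not_nonempty_iff_eq_empty] at hne
      simp [hne]

theorem aux_fiber {P Q V : Type*} [DecidableEq Q] [AddCommGroup V]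
    (hV : ∀ v : V, v + v = 0) (Z : Finset P) (M : Finset Q) (α : P → Q)
    (hα : ∀ e ∈ Z, α e ∈ M) (g : Q → V) :
    ∑ e ∈ Z, g (α e) =
      ∑ f ∈ M.filter (fun f => Odd (Z.filter (fun e => α e = f)).card), g f := by
  rw [← Finset.sum_fiberwise_of_maps_to hα, Finset.sum_filter]
  refine Finset.sum_congr rfl fun f _ => ?_
  rw [Finset.sum_congr rfl (g := fun _ => g f)
    (fun e he => by rw [(Finset.mem_filter.1 he).2]), Finset.sum_const]
  split_ifs with ho
  · obtain ⟨n, hn⟩ := ho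
    rw [hn, add_nsmul, mul_nsmul, two_nsmul, hV]
    simp
  · obtain ⟨n, hn⟩ := Nat.not_odd_iff_even.1 ho
    rw [hn, add_nsmul, hV]

theorem aux_char {n : ℕ} (v : Fin n → ZMod 2) : v + v = 0 := by
  funext i
  exact CharTwo.add_self_eq_zero (v i)

theorem aux_comp {l m k : ℕ} (L : Finset (Fin l → ZMod 2)) (M : Finset (Fin m → ZMod 2))
    (N : Finset (Fin k → ZMod 2))
    (α : (Fin l → ZMod 2) → (Fin m → ZMod 2))
    (β : (Fin m → ZMod 2) → (Fin k → ZMod 2))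
    (hα : IsMHom L M α) (hβ : IsMHom M N β) (Z : Finset (Fin l → ZMod 2))
    (hZ : IsCircuit L Z) : ∑ e ∈ Z, β (α e) = 0 := by
  have hm : ∀ e ∈ Z, α e ∈ M := fun e he => hα.1 e (hZ.1 he)
  rw [aux_fiber aux_char Z M α hm β]
  apply aux_cycle M β hβ.2 _ (Finset.filter_subset _ _)
  have := aux_fiber aux_char Z M α hm (fun x => x)
  rw [← this]
  exact hα.2 Z hZ

theorem stmt4 (l m k : ℕ) (L : Finset (Fin l → ZMod 2)) (M : Finset (Fin m → ZMod 2))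
    (N : Finset (Fin k → ZMod 2))
    (α α' : (Fin l → ZMod 2) → (Fin m → ZMod 2))
    (β : (Fin m → ZMod 2) → (Fin k → ZMod 2))
    (hα : IsMHom L M α) (hα' : IsMHom L M α') (hβ : IsMHom M N β)
    (hadj : MAdj L α α') :
    (∀ e ∈ L, (β ∘ α) e = (β ∘ α') e) ∨ MAdj L (β ∘ α) (β ∘ α') := by
  obtain ⟨C, hC, hd⟩ := hadj
  by_cases heq : ∀ e ∈ L, (β ∘ α) e = (β ∘ α') e
  · exact Or.inl heq
  right
  refine ⟨C, hC, ?_⟩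
  push Not at heq
  obtain ⟨e₀, he₀, hne⟩ := heq
  obtain ⟨i, hi⟩ := Function.ne_iff.1 hne
  have hsub : ∀ e ∈ L, (β ∘ α) e ≠ (β ∘ α') e → e ∈ C := by
    intro e he h
    refine (hd e he).1 fun h' => h ?_
    simp [h']
  have hD : C.filter (fun e => β (α e) i ≠ β (α' e) i) = C := by
    apply hC.2.2.2 _ (Finset.filter_subset _ _)
    · exact ⟨e₀, Finset.mem_filter.2 ⟨hsub e₀ he₀ hne, hi⟩⟩
    · intro Z hZ
      have h1 := congrFun (aux_comp L M N α β hα hβ Z hZ) i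
      have h2 := congrFun (aux_comp L M N α' β hα' hβ Z hZ) i
      rw [Finset.sum_apply] at h1 h2
      have h3 : ∑ e ∈ Z, (β (α e) i + β (α' e) i) = 0 := by
        rw [Finset.sum_add_distrib, h1, h2]; simp
      have h4 : C.filter (fun e => β (α e) i ≠ β (α' e) i) ∩ Z
          = Z.filter (fun e => β (α e) i ≠ β (α' e) i) := by
        ext e
        simp only [Finset.mem_inter, Finset.mem_filter]
        constructor
        · rintro ⟨⟨_, h⟩, hz⟩
          exact ⟨hz, h⟩
        · rintro ⟨hz, h⟩
          exact ⟨⟨hsub e (hZ.1 hz) fun h' => h (congrFun h' i), h⟩, hz⟩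
      have key : ∀ a b : ZMod 2, a + b = if a ≠ b then 1 else 0 := by decide
      rw [h4, ← ZMod.natCast_eq_zero_iff_even, ← h3, Finset.card_filter, Nat.cast_sum]
      refine Finset.sum_congr rfl fun e _ => ?_
      rw [key]
      split_ifs <;> simp
  intro e he
  refine ⟨hsub e he, fun hc h => ?_⟩
  rw [← hD] at hc
  exact (Finset.mem_filter.1 hc).2 (congrFun h i)
end

section
/- Let L ⊆ (Fin l → ZMod 2), M ⊆ (Fin m → ZMod 2), and N ⊆ (Fin k → ZMod 2) be binary matroids, let β, β' : M → N be matroid homomorphisms that are adjacent in the recolouring graph mCol(M, N), and let α : L → M be a matroid homomorphism. Then β ∘ α and β' ∘ α are joined by a walk in mCol(L, N). -/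
lemma even_iff_sum {P : Type*} [DecidableEq P] (C Z : Finset P) :
    Even (C ∩ Z).card ↔ ∑ e ∈ Z, (if e ∈ C then (1 : ZMod 2) else 0) = 0 := by
  rw [Finset.sum_ite_mem, Finset.sum_const, nsmul_eq_mul, mul_one, ZMod.natCast_eq_zero_iff_even,
    Finset.inter_comm]

lemma exists_min_sub {P : Type*} [DecidableEq P] (p : Finset P → Prop) (Z : Finset P)
    (hZ : Z.Nonempty) (hp : p Z) :
    ∃ Z' ⊆ Z, Z'.Nonempty ∧ p Z' ∧ ∀ Y ⊆ Z', Y.Nonempty → p Y → Y = Z' := by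
  induction Z using Finset.strongInduction with
  | H Z ih =>
    by_cases h : ∀ Y ⊆ Z, Y.Nonempty → p Y → Y = Z
    · exact ⟨Z, subset_rfl, hZ, hp, h⟩
    · push Not at h
      obtain ⟨Y, hY, hn, hpY, hne⟩ := h
      obtain ⟨W, hW, h⟩ := ih Y (Finset.ssubset_iff_subset_ne.2 ⟨hY, hne⟩) hn hpY
      exact ⟨W, hW.trans hY, h⟩

lemma sum_cycle {P Q : Type*} [AddCommGroup P] [AddCommGroup Q] [DecidableEq P]
    (E : Finset P) (f : P → Q) (hf : ∀ Z, IsCircuit E Z → ∑ e ∈ Z, f e = 0)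
    (Z : Finset P) (hZE : Z ⊆ E) (hZ : ∑ e ∈ Z, e = 0) : ∑ e ∈ Z, f e = 0 := by
  induction Z using Finset.strongInduction with
  | H Z ih =>
    rcases Z.eq_empty_or_nonempty with rfl | hn
    · simp
    obtain ⟨Y, hY, hYn, hY0, hmin⟩ := exists_min_sub (fun Z => ∑ e ∈ Z, e = 0) Z hn hZ
    have h1 := Finset.sum_sdiff hY (f := fun e => e)
    have h2 := Finset.sum_sdiff hY (f := f)
    rw [hY0, add_zero, hZ] at h1
    rw [← h2, hf Y ⟨hY.trans hZE, hYn, hY0, hmin⟩, add_zero]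
    exact ih _ (Finset.sdiff_ssubset hY hYn) (Finset.sdiff_subset.trans hZE) h1

lemma sum_pull {R P Q : Type*} [AddCommGroup P] [AddCommGroup Q] [DecidableEq P] [DecidableEq R]
    (hP : ∀ x : P, x + x = 0) (hQ : ∀ x : Q, x + x = 0)
    (E : Finset P) (f : P → Q) (hf : ∀ Z, IsCircuit E Z → ∑ e ∈ Z, f e = 0)
    (a : R → P) (Z : Finset R) (hZE : ∀ e ∈ Z, a e ∈ E) (hZ : ∑ e ∈ Z, a e = 0) :
    ∑ e ∈ Z, f (a e) = 0 := by
  induction Z using Finset.strongInduction with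
  | H Z ih =>
    by_cases hi : Set.InjOn a Z
    · have := sum_cycle E f hf (Z.image a) (by
        intro x hx
        obtain ⟨e, he, rfl⟩ := Finset.mem_image.1 hx
        exact hZE e he) (by rwa [Finset.sum_image hi])
      rwa [Finset.sum_image hi] at this
    · simp only [Set.InjOn] at hi
      push Not at hi
      obtain ⟨x, hx, y, hy, hxy, hne⟩ := hi
      have hx : x ∈ Z := hx
      have hy' : y ∈ Z.erase x := Finset.mem_erase.2 ⟨hne.symm, hy⟩
      rw [← Finset.add_sum_erase _ _ hx, ← Finset.add_sum_erase _ _ hy', ← add_assoc, hxy,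
        hQ, zero_add]
      rw [← Finset.add_sum_erase _ _ hx, ← Finset.add_sum_erase _ _ hy', ← add_assoc, hxy,
        hP, zero_add] at hZ
      refine ih _ ((Finset.erase_ssubset hy').trans (Finset.erase_ssubset hx)) ?_ hZ
      intro e he
      exact hZE e (Finset.mem_of_mem_erase (Finset.mem_of_mem_erase he))

lemma walk_aux {P Q : Type*} [AddCommGroup P] [AddCommGroup Q] [DecidableEq P]
    (hQ : ∀ x : Q, x + x = 0) (L : Finset P) (N : Finset Q) (v : Q) (hv : v ≠ 0) (τ' : P → Q)
    (h' : IsMHom L N τ') (D : Finset P) (hDL : D ⊆ L)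
    (hD : ∀ Z, IsCircuit L Z → Even (D ∩ Z).card) (τ : P → Q) (h : IsMHom L N τ)
    (hd : ∀ e ∈ L, τ' e = τ e + if e ∈ D then v else 0) : MWalk L N τ τ' := by
  induction D using Finset.strongInduction generalizing τ with
  | H D ih =>
    rcases D.eq_empty_or_nonempty with rfl | hn
    · exact Relation.ReflTransGen.single ⟨h, h', Or.inl fun e he => by simp [hd e he]⟩
    obtain ⟨C, hC, hCn, hC0, hmin⟩ :=
      exists_min_sub (fun D => ∀ Z, IsCircuit L Z → Even (D ∩ Z).card) D hn hD
    have hom : IsMHom L N (fun e => τ e + if e ∈ C then v else 0) := by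
      constructor
      · intro e he
        by_cases hc : e ∈ C
        · have := hd e he
          rw [if_pos (hC hc)] at this
          simp only [if_pos hc]
          rw [← this]; exact h'.1 e he
        · simpa [hc] using h.1 e he
      · intro Z hZ
        rw [Finset.sum_add_distrib, h.2 Z hZ, zero_add, Finset.sum_ite_mem, Finset.sum_const,
          Finset.inter_comm]
        obtain ⟨r, hr⟩ := hC0 Z hZ
        rw [hr, add_nsmul, hQ]
    refine Relation.ReflTransGen.head (b := fun e => τ e + if e ∈ C then v else 0)
      ⟨h, hom, Or.inr ⟨C, ⟨hC.trans hDL, hCn, hC0, hmin⟩, ?_⟩⟩ ?_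
    · intro e he
      by_cases hc : e ∈ C <;> simp [hc, hv]
    · refine ih (D \ C) (Finset.sdiff_ssubset hC hCn) (Finset.sdiff_subset.trans hDL) ?_ _ hom ?_
      · intro Z hZ
        have h1 := hD Z hZ
        have h2 := hC0 Z hZ
        rw [even_iff_sum] at *
        have : ∀ e ∈ Z, (if e ∈ D \ C then (1 : ZMod 2) else 0) =
            (if e ∈ D then 1 else 0) - (if e ∈ C then 1 else 0) := by
          intro e _
          by_cases hc : e ∈ C
          · simp [hc, hC hc]
          · simp [hc]
        rw [Finset.sum_congr rfl this, Finset.sum_sub_distrib, h1, h2, sub_zero]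
      · intro e he
        rw [hd e he]
        by_cases hc : e ∈ C
        · simp [hc, hC hc]
        · simp [hc]

lemma pi_add_self {n : ℕ} (x : Fin n → ZMod 2) : x + x = 0 := by
  ext i
  exact CharTwo.add_self_eq_zero (x i)

theorem stmt5 (l m k : ℕ) (L : Finset (Fin l → ZMod 2)) (M : Finset (Fin m → ZMod 2))
    (N : Finset (Fin k → ZMod 2))
    (β β' : (Fin m → ZMod 2) → (Fin k → ZMod 2))
    (α : (Fin l → ZMod 2) → (Fin m → ZMod 2))
    (hβ : IsMHom M N β) (hβ' : IsMHom M N β') (hα : IsMHom L M α)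
    (hadj : MAdj M β β') :
    MWalk L N (β ∘ α) (β' ∘ α) := by
  obtain ⟨C, ⟨hCM, hCn, hC0, hmin⟩, hC⟩ := hadj
  have z2 : ∀ x : ZMod 2, x ≠ 0 → x = 1 := by decide
  have hconst : ∀ e ∈ C, ∀ e' ∈ C, ∀ i, (β' e - β e) i ≠ 0 → (β' e' - β e') i ≠ 0 := by
    intro e he e' he' i hi
    have := hmin (C.filter fun e => (β' e - β e) i ≠ 0) (Finset.filter_subset _ _)
      ⟨e, Finset.mem_filter.2 ⟨he, hi⟩⟩ (by
        intro Z hZ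
        rw [even_iff_sum]
        have h1 : ∑ e ∈ Z, (β' e - β e) i = 0 := by
          rw [← Finset.sum_apply, Finset.sum_sub_distrib, hβ.2 Z hZ, hβ'.2 Z hZ]
          simp
        refine Eq.trans ?_ h1
        refine Finset.sum_congr rfl fun x hx => ?_
        by_cases hxi : (β' x - β x) i = 0
        · simp only [Finset.mem_filter, hxi]; simp
        · have hxC : x ∈ C := (hC x (hZ.1 hx)).1 (fun hh => hxi (by simp [hh]))
          rw [if_pos (Finset.mem_filter.2 ⟨hxC, hxi⟩), z2 _ hxi])
    rw [← this] at he'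
    exact (Finset.mem_filter.1 he').2
  obtain ⟨e0, he0⟩ := hCn
  have hcomp : ∀ γ, IsMHom M N γ → IsMHom L N (γ ∘ α) := fun γ hγ =>
    ⟨fun e he => hγ.1 _ (hα.1 e he), fun Z hZ =>
      sum_pull pi_add_self pi_add_self M γ hγ.2 α Z (fun e he => hα.1 e (hZ.1 he)) (hα.2 Z hZ)⟩
  refine walk_aux pi_add_self L N (β' e0 - β e0) ?_ (β' ∘ α) (hcomp _ hβ')
    (L.filter fun e => α e ∈ C) (Finset.filter_subset _ _) ?_ (β ∘ α) (hcomp _ hβ) ?_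
  · intro hh
    exact (hC e0 (hCM he0)).2 he0 (sub_eq_zero.1 hh).symm
  · intro Z hZ
    rw [even_iff_sum]
    have := sum_pull pi_add_self (CharTwo.add_self_eq_zero) M
      (fun e => if e ∈ C then (1 : ZMod 2) else 0)
      (fun Y hY => (even_iff_sum C Y).1 (hC0 Y hY)) α Z (fun e he => hα.1 e (hZ.1 he)) (hα.2 Z hZ)
    refine Eq.trans ?_ this
    refine Finset.sum_congr rfl fun x hx => ?_
    simp [hZ.1 hx]
  · intro e he
    by_cases hc : α e ∈ C
    · rw [if_pos (Finset.mem_filter.2 ⟨he, hc⟩)]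
      have : β' e0 - β e0 = β' (α e) - β (α e) := by
        ext i
        have h1 := hconst e0 he0 _ hc i
        have h2 := hconst _ hc e0 he0 i
        by_cases h : (β' e0 - β e0) i = 0
        · rw [h]; by_contra h3; exact h2 (Ne.symm h3) h
        · rw [z2 _ h, z2 _ (h1 h)]
      rw [this]; simp
    · have : β (α e) = β' (α e) := by
        by_contra h; exact hc ((hC _ (hα.1 e he)).1 h)
      simp [hc, this]
end

section
/- Let F ⊆ (Fin k → ZMod 2) be a binary matroid, let F' ⊆ F, and suppose there is a matroid homomorphism r : F → F whose image is contained in F' and which fixes every point of F' (a retraction of F onto F'). Then for every binary matroid E ⊆ (Fin m → ZMod 2) and every pair of matroid homomorphisms τ, τ' : E → F', τ and τ' are joined by a walk in the recolouring graph mCol(E, F') if and only if they are joined by a walk in mCol(E, F). -/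
theorem aux_cycle_s6 {k : ℕ} (F : Finset (Fin k → ZMod 2))
    (r : (Fin k → ZMod 2) → (Fin k → ZMod 2))
    (hr : ∀ Z, IsCircuit F Z → ∑ e ∈ Z, r e = 0) (n : ℕ) :
    ∀ Z ⊆ F, Z.card ≤ n → ∑ e ∈ Z, e = 0 → ∑ e ∈ Z, r e = 0 := by
  classical
  induction n with
  | zero =>
    intro Z _ hc _
    have : Z = ∅ := by simpa using hc
    simp [this]
  | succ n ih =>
    intro Z hZ hc h0
    by_cases hcirc : IsCircuit F Z
    · exact hr Z hcirc
    by_cases hne : Z.Nonempty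
    · have : ∃ Y ⊆ Z, Y.Nonempty ∧ ∑ e ∈ Y, e = 0 ∧ Y ≠ Z := by
        by_contra hcon
        apply hcirc
        refine ⟨hZ, hne, h0, fun Y h1 h2 h3 => ?_⟩
        by_contra h4
        exact hcon ⟨Y, h1, h2, h3, h4⟩
      obtain ⟨Y, hY, hYne, hY0, hYZ⟩ := this
      have hlt : Y.card < Z.card := Finset.card_lt_card (Finset.ssubset_iff_subset_ne.2 ⟨hY, hYZ⟩)
      have hs := Finset.sum_sdiff (f := fun e => e) hY
      have hs' := Finset.sum_sdiff (f := r) hY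
      have hc2 : (Z \ Y).card + Y.card = Z.card := Finset.card_sdiff_add_card_eq_card hY
      have hpos := hYne.card_pos
      rw [hY0, h0, add_zero] at hs
      rw [← hs', ih Y (hY.trans hZ) (by omega) hY0,
        ih (Z \ Y) (Finset.sdiff_subset.trans hZ) (by omega) hs, add_zero]
    · rw [Finset.not_nonempty_iff_eq_empty] at hne
      simp [hne]

theorem aux_fiber_s6 {P : Type*} {k : ℕ} (F : Finset (Fin k → ZMod 2)) (Z : Finset P)
    (t : P → (Fin k → ZMod 2)) (ht : ∀ e ∈ Z, t e ∈ F)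
    (g : (Fin k → ZMod 2) → (Fin k → ZMod 2)) :
    ∑ e ∈ Z, g (t e) = ∑ f ∈ F.filter (fun f => Odd (Z.filter (fun e => t e = f)).card), g f := by
  classical
  rw [← Finset.sum_fiberwise_of_maps_to ht, Finset.sum_filter]
  refine Finset.sum_congr rfl fun f _ => ?_
  have : ∑ e ∈ Z with t e = f, g (t e) = ∑ e ∈ Z with t e = f, g f :=
    Finset.sum_congr rfl fun e he => by rw [(Finset.mem_filter.1 he).2]
  rw [this, Finset.sum_const]
  have h2 : ∀ x : Fin k → ZMod 2, x + x = 0 := fun x => by ext i; exact CharTwo.add_self_eq_zero _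
  split_ifs with h
  · obtain ⟨c, hc⟩ := h
    rw [hc, add_smul, mul_comm, mul_smul, two_smul, one_smul, h2, smul_zero, zero_add]
  · obtain ⟨c, hc⟩ := Nat.not_odd_iff_even.1 h
    rw [hc, add_smul, h2]

theorem aux_comp_s6 {m k : ℕ} (F F' : Finset (Fin k → ZMod 2))
    (r : (Fin k → ZMod 2) → (Fin k → ZMod 2))
    (hr : IsMHom F F r) (him : ∀ e ∈ F, r e ∈ F') (E : Finset (Fin m → ZMod 2))
    (t : (Fin m → ZMod 2) → (Fin k → ZMod 2)) (ht : IsMHom E F t) :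
    IsMHom E F' (fun e => r (t e)) := by
  refine ⟨fun e he => him _ (ht.1 e he), fun Z hZ => ?_⟩
  have hm : ∀ e ∈ Z, t e ∈ F := fun e he => ht.1 e (hZ.1 he)
  rw [aux_fiber_s6 F Z t hm r]
  refine aux_cycle_s6 F r hr.2 _ _ (Finset.filter_subset _ _) le_rfl ?_
  rw [← aux_fiber_s6 F Z t hm (fun x => x)]
  exact ht.2 Z hZ

theorem aux_adj {m k : ℕ} (E C : Finset (Fin m → ZMod 2)) (hC : IsCocircuit E C)
    (s s' : (Fin m → ZMod 2) → (Fin k → ZMod 2))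
    (hs : ∀ Z, IsCircuit E Z → ∑ e ∈ Z, s e = 0) (hs' : ∀ Z, IsCircuit E Z → ∑ e ∈ Z, s' e = 0)
    (hsub : ∀ e ∈ E, s e ≠ s' e → e ∈ C) :
    (∀ e ∈ E, s e = s' e) ∨ MAdj E s s' := by
  by_cases h : ∀ e ∈ E, s e = s' e
  · exact Or.inl h
  right
  refine ⟨C, hC, fun e he => ⟨hsub e he, fun heC => ?_⟩⟩
  push Not at h
  obtain ⟨a, ha, hne⟩ := h
  obtain ⟨i, hi⟩ := Function.ne_iff.1 hne
  have key : C.filter (fun e => s e i ≠ s' e i) = C := by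
    refine hC.2.2.2 _ (Finset.filter_subset _ _) ⟨a, by simp [hi, hsub a ha hne]⟩ fun Z hZ => ?_
    have e1 : C.filter (fun e => s e i ≠ s' e i) ∩ Z = Z.filter (fun e => s e i ≠ s' e i) := by
      ext e
      simp only [Finset.mem_inter, Finset.mem_filter]
      constructor
      · rintro ⟨⟨_, h1⟩, h2⟩
        exact ⟨h2, h1⟩
      · rintro ⟨h2, h1⟩
        exact ⟨⟨hsub e (hZ.1 h2) (fun h => h1 (by rw [h])), h1⟩, h2⟩
    rw [e1, ← ZMod.natCast_eq_zero_iff_even, Finset.card_filter]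
    have e2 : ∑ e ∈ Z, (s e i + s' e i) = 0 := by
      have h1 := congrFun (hs Z hZ) i
      have h2 := congrFun (hs' Z hZ) i
      rw [Finset.sum_apply] at h1 h2
      rw [Finset.sum_add_distrib, h1, h2]
      rfl
    rw [← e2]
    push_cast
    refine Finset.sum_congr rfl fun e _ => ?_
    generalize s e i = x
    generalize s' e i = y
    revert x y
    decide
  rw [← key] at heC
  exact fun h => (Finset.mem_filter.1 heC).2 (by rw [h])

theorem stmt6 (k : ℕ) (F F' : Finset (Fin k → ZMod 2)) (hF' : F' ⊆ F)
    (r : (Fin k → ZMod 2) → (Fin k → ZMod 2))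
    (hr : IsMHom F F r) (him : ∀ e ∈ F, r e ∈ F') (hfix : ∀ e ∈ F', r e = e)
    (m : ℕ) (E : Finset (Fin m → ZMod 2))
    (τ τ' : (Fin m → ZMod 2) → (Fin k → ZMod 2))
    (hτ : IsMHom E F' τ) (hτ' : IsMHom E F' τ') :
    MWalk E F' τ τ' ↔ MWalk E F τ τ' := by
  constructor
  · intro h
    refine Relation.ReflTransGen.mono ?_ _ _ h
    rintro a b ⟨ha, hb, h⟩
    exact ⟨⟨fun e he => hF' (ha.1 e he), ha.2⟩, ⟨fun e he => hF' (hb.1 e he), hb.2⟩, h⟩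
  · intro h
    have hw : MWalk E F' (fun e => r (τ e)) (fun e => r (τ' e)) := by
      refine Relation.ReflTransGen.lift (fun (t : (Fin m → ZMod 2) → (Fin k → ZMod 2)) e => r (t e)) ?_ _ _ h
      rintro a b ⟨ha, hb, hab⟩
      have ha' := aux_comp_s6 F F' r hr him E a ha
      have hb' := aux_comp_s6 F F' r hr him E b hb
      refine ⟨ha', hb', ?_⟩
      rcases hab with hab | ⟨C, hC, hab⟩
      · left
        intro e he
        simp only [hab e he]
      · refine aux_adj E C hC _ _ ha'.2 hb'.2 fun e he hne => (hab e he).1 fun h => hne ?_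
        simp only [h]
    have emb : ∀ t, IsMHom E F' t → IsMHom E F t :=
      fun t ht => ⟨fun e he => hF' (ht.1 e he), ht.2⟩
    have h1 : MStep E F' τ (fun e => r (τ e)) :=
      ⟨hτ, aux_comp_s6 F F' r hr him E τ (emb _ hτ), Or.inl fun e he => (hfix _ (hτ.1 e he)).symm⟩
    have h2 : MStep E F' (fun e => r (τ' e)) τ' :=
      ⟨aux_comp_s6 F F' r hr him E τ' (emb _ hτ'), hτ', Or.inl fun e he => hfix _ (hτ'.1 e he)⟩
    exact (Relation.ReflTransGen.head h1 hw).tail h2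
end

section
/- Let G and H be finite simple graphs and let φ : G → H be a graph homomorphism. Then the map from E_G to E_H sending the point 𝟙_u + 𝟙_v (for each edge uv of G) to 𝟙_{φ(u)} + 𝟙_{φ(v)} is well defined and is a matroid homomorphism from the graphic matroid M(G) to the graphic matroid M(H). -/
theorem stmt9 {V W : Type*} [Fintype V] [Fintype W] [DecidableEq V] [DecidableEq W]
    (G : SimpleGraph V) (H : SimpleGraph W) (φ : G →g H)
    (EG : Finset (V → ZMod 2)) (EH : Finset (W → ZMod 2))
    (hEG : ∀ x, x ∈ EG ↔ ∃ u v, G.Adj u v ∧ x = ind u + ind v)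
    (hEH : ∀ x, x ∈ EH ↔ ∃ u v, H.Adj u v ∧ x = ind u + ind v) :
    ∃ τ : (V → ZMod 2) → (W → ZMod 2),
      (∀ u v, G.Adj u v → τ (ind u + ind v) = ind (φ u) + ind (φ v)) ∧
      IsMHom EG EH τ := by
  let L : (V → ZMod 2) →+ (W → ZMod 2) :=
    { toFun := fun x => ∑ v, x v • ind (φ v)
      map_zero' := by simp
      map_add' := by
        intro x y
        simp [add_smul, Finset.sum_add_distrib] }
  have hL : ∀ u, L (ind u) = ind (φ u) := by
    intro u
    change ∑ v, (ind u : V → ZMod 2) v • (ind (φ v) : W → ZMod 2) = ind (φ u)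
    rw [Finset.sum_eq_single u]
    · simp [ind]
    · intro b _ hb
      simp [ind, hb]
    · simp
  refine ⟨L, fun u v _ => by rw [map_add, hL, hL], ?_, ?_⟩
  · intro e he
    obtain ⟨u, v, huv, rfl⟩ := (hEG e).1 he
    exact (hEH _).2 ⟨φ u, φ v, φ.map_adj huv, by rw [map_add, hL, hL]⟩
  · intro Z hZ
    rw [← map_sum, hZ.2.2.1, map_zero]
end

section
/- Let G be a finite simple graph, let F be a finite set of distinct nonzero vectors in (Fin m → ZMod 2), and let φ, ψ : G → D(F) be graph homomorphisms that are Kempe-adjacent: there are vectors b, b' and a connected component with vertex set U of the subgraph of G induced on {u : φ(u) = b' or φ(u) = b' + b} such that ψ(u) = φ(u) + b for u ∈ U and ψ(u) = φ(u) otherwise. Then the matroid homomorphisms τ_φ and τ_ψ (where τ_φ(𝟙_u + 𝟙_v) = φ(u) + φ(v)) are joined by a walk in the recolouring graph mCol(E_G, F). -/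
/-- Kempe adjacency of two homomorphisms to a decision graph:
`ψ` is obtained from `φ` by adding `b` on the vertex set `U` of a connected
component of the subgraph induced on the vertices coloured `b'` or `b' + b`. -/
def KempeAdj {V : Type*} {m : ℕ} {G : SimpleGraph V} {F : Finset (Fin m → ZMod 2)}
    (φ ψ : G →g decisionGraph F) : Prop :=
  ∃ (b b' : Fin m → ZMod 2) (U : Set V),
    (∃ c : (G.induce {u | φ u = b' ∨ φ u = b' + b}).ConnectedComponent,
      U = Subtype.val '' {x | (G.induce {u | φ u = b' ∨ φ u = b' + b}).connectedComponentMk x = c}) ∧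
    (∀ u ∈ U, ψ u = φ u + b) ∧ (∀ u ∉ U, ψ u = φ u)

theorem aux_b {m : ℕ} (b : Fin m → ZMod 2) : b + b = 0 := by
  funext i
  exact CharTwo.add_self_eq_zero (b i)

theorem aux_even {m : ℕ} (b : Fin m → ZMod 2) (n : ℕ) (h : Even n) : n • b = 0 := by
  obtain ⟨k, rfl⟩ := h
  rw [add_smul, aux_b]

theorem aux_odd {m : ℕ} (b : Fin m → ZMod 2) (hb : b ≠ 0) (n : ℕ) (h : n • b = 0) : Even n := by
  by_contra hn
  rw [Nat.not_even_iff_odd] at hn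
  obtain ⟨k, rfl⟩ := hn
  rw [add_smul, aux_even b _ (even_two_mul k), one_smul, zero_add] at h
  exact hb h

theorem aux_walk {P : Type*} [AddCommGroup P] [DecidableEq P] {m : ℕ}
    (E : Finset P) (F : Finset (Fin m → ZMod 2)) (b : Fin m → ZMod 2) (hb : b ≠ 0)
    (τ' : P → Fin m → ZMod 2) (h' : IsMHom E F τ') (n : ℕ) :
    ∀ (C : Finset P) (τ : P → Fin m → ZMod 2), C.card = n → IsMHom E F τ → C ⊆ E →
      (∀ e ∈ C, τ' e = τ e + b) → (∀ e ∈ E, e ∉ C → τ' e = τ e) → MWalk E F τ τ' := by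
  induction n using Nat.strong_induction_on with
  | _ n ih =>
  intro C τ hn hτ hCE h1 h2
  have key : ∀ (D : Finset P) (σ : P → Fin m → ZMod 2) (Z : Finset P),
      (∀ e ∈ Z, σ e = τ e + if e ∈ D then b else 0) →
      ∑ e ∈ Z, σ e = ∑ e ∈ Z, τ e + (D ∩ Z).card • b := by
    intro D σ Z h
    rw [Finset.sum_congr rfl h, Finset.sum_add_distrib, ← Finset.sum_filter, Finset.sum_const,
      Finset.filter_mem_eq_inter, Finset.inter_comm]
  rcases C.eq_empty_or_nonempty with rfl | hne
  · exact Relation.ReflTransGen.single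
      ⟨hτ, h', Or.inl fun e he => (h2 e he (Finset.notMem_empty e)).symm⟩
  have hev : ∀ Z, IsCircuit E Z → Even (C ∩ Z).card := by
    intro Z hZ
    apply aux_odd b hb
    have := key C τ' Z (by
      intro e he
      by_cases hc : e ∈ C
      · simp [hc, h1 e hc]
      · simp [hc, h2 e (hZ.1 he) hc])
    rw [h'.2 Z hZ, hτ.2 Z hZ, zero_add] at this
    exact this.symm
  let p : Finset P → Prop := fun D => D ⊆ C ∧ D.Nonempty ∧ ∀ Z, IsCircuit E Z → Even (D ∩ Z).card
  obtain ⟨C0, hC0, hmin⟩ : ∃ C0, p C0 ∧ ∀ D, p D → D ⊆ C0 → D = C0 := by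
    have hex : ∃ k, ∃ D, p D ∧ D.card = k := ⟨_, C, ⟨subset_rfl, hne, hev⟩, rfl⟩
    classical
    obtain ⟨D, hD, hDk⟩ := Nat.find_spec hex
    refine ⟨D, hD, fun D' hD' hs => Finset.eq_of_subset_of_card_le hs ?_⟩
    rw [hDk]
    exact Nat.find_min' hex ⟨D', hD', rfl⟩
  obtain ⟨hs, hne0, hev0⟩ := hC0
  let σ : P → Fin m → ZMod 2 := fun e => τ e + if e ∈ C0 then b else 0
  have hσ : IsMHom E F σ := by
    constructor
    · intro e he
      by_cases hc : e ∈ C0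
      · have : σ e = τ' e := by simp [σ, hc, h1 e (hs hc)]
        rw [this]; exact h'.1 e he
      · have : σ e = τ e := by simp [σ, hc]
        rw [this]; exact hτ.1 e he
    · intro Z hZ
      rw [key C0 σ Z (fun e _ => rfl), hτ.2 Z hZ, aux_even b _ (hev0 Z hZ), add_zero]
  refine Relation.ReflTransGen.head (b := σ) ⟨hτ, hσ, Or.inr ⟨C0, ⟨hs.trans hCE, hne0, hev0, ?_⟩, ?_⟩⟩ ?_
  · intro D hD hDn hDe
    exact hmin D ⟨hD.trans hs, hDn, hDe⟩ hD
  · intro e _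
    by_cases hc : e ∈ C0 <;> simp [σ, hc, hb]
  · refine ih (C \ C0).card ?_ (C \ C0) σ rfl hσ (Finset.sdiff_subset.trans hCE) ?_ ?_
    · rw [← hn]
      exact Finset.card_lt_card (Finset.sdiff_ssubset hs hne0)
    · intro e he
      rw [Finset.mem_sdiff] at he
      simp [σ, he.2, h1 e he.1]
    · intro e he hc
      by_cases h0 : e ∈ C0
      · simp [σ, h0, h1 e (hs h0)]
      · have : e ∉ C := fun h => hc (Finset.mem_sdiff.2 ⟨h, h0⟩)
        simp [σ, h0, h2 e he this]

theorem aux_hom {V : Type*} [Fintype V] [DecidableEq V] {m : ℕ}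
    (G : SimpleGraph V) (F : Finset (Fin m → ZMod 2))
    (EG : Finset (V → ZMod 2))
    (hEG : ∀ x, x ∈ EG ↔ ∃ u v, G.Adj u v ∧ x = ind u + ind v)
    (φ : G →g decisionGraph F)
    (τ : (V → ZMod 2) → (Fin m → ZMod 2))
    (hτ : ∀ u v, G.Adj u v → τ (ind u + ind v) = φ u + φ v) : IsMHom EG F τ := by
  constructor
  · intro e he
    obtain ⟨u, v, huv, rfl⟩ := (hEG e).1 he
    rw [hτ u v huv]
    exact (φ.map_adj huv).1
  · intro Z hZ
    let L := Fintype.linearCombination (ZMod 2) (fun v => φ v)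
    have hL : ∀ u, L (ind u) = φ u := by
      intro u
      simp [L, ind, Fintype.linearCombination_apply_single]
    have : ∀ e ∈ Z, τ e = L e := by
      intro e he
      obtain ⟨u, v, huv, rfl⟩ := (hEG e).1 (hZ.1 he)
      rw [hτ u v huv, map_add, hL, hL]
    rw [Finset.sum_congr rfl this, ← map_sum, hZ.2.2.1, map_zero]

theorem stmt13 {V : Type*} [Fintype V] [DecidableEq V] (m : ℕ)
    (G : SimpleGraph V) (F : Finset (Fin m → ZMod 2)) (hF : ∀ f ∈ F, f ≠ 0)
    (EG : Finset (V → ZMod 2))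
    (hEG : ∀ x, x ∈ EG ↔ ∃ u v, G.Adj u v ∧ x = ind u + ind v)
    (φ ψ : G →g decisionGraph F) (hK : KempeAdj φ ψ)
    (τφ τψ : (V → ZMod 2) → (Fin m → ZMod 2))
    (hτφ : ∀ u v, G.Adj u v → τφ (ind u + ind v) = φ u + φ v)
    (hτψ : ∀ u v, G.Adj u v → τψ (ind u + ind v) = ψ u + ψ v) :
    MWalk EG F τφ τψ := by
  classical
  obtain ⟨b, b', U, -, hU, hU'⟩ := hK
  have h1 := aux_hom G F EG hEG φ τφ hτφ
  have h2 := aux_hom G F EG hEG ψ τψ hτψ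
  have h3 : ∀ e ∈ EG, τψ e = τφ e ∨ τψ e = τφ e + b := by
    intro e he
    obtain ⟨u, v, huv, rfl⟩ := (hEG e).1 he
    rw [hτφ u v huv, hτψ u v huv]
    by_cases hu : u ∈ U <;> by_cases hv : v ∈ U
    · left
      rw [hU u hu, hU v hv, add_add_add_comm, aux_b, add_zero]
    · right
      rw [hU u hu, hU' v hv, add_right_comm]
    · right
      rw [hU' u hu, hU v hv, add_assoc]
    · left
      rw [hU' u hu, hU' v hv]
  by_cases hb : b = 0
  · refine Relation.ReflTransGen.single ⟨h1, h2, Or.inl fun e he => ?_⟩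
    have := h3 e he
    rw [hb, add_zero, or_self] at this
    exact this.symm
  · refine aux_walk EG F b hb τψ h2 _ (EG.filter fun e => τψ e ≠ τφ e) τφ rfl h1
      (Finset.filter_subset _ _) ?_ ?_
    · intro e he
      rw [Finset.mem_filter] at he
      exact (h3 e he.1).resolve_left he.2
    · intro e he hc
      by_contra h
      exact hc (Finset.mem_filter.2 ⟨he, h⟩)
end

section
/- Let E be the set of the six weight-2 vectors in (Fin 4 → ZMod 2) (a representation of the graphic matroid M(K_4)), let E' ⊆ E be the three weight-2 vectors whose last coordinate is 0 (a representation of M(K_3)), and let C = {e ∈ E : the last coordinate of e is 1}. Define r : E → E by r(e) = e + (1,1,1,1) for e ∈ C and r(e) = e otherwise. Then r is a matroid homomorphism from E to E with image E' that fixes every point of E', the set C is a cocircuit of E, and r is adjacent to the identity map in the recolouring graph mCol(E, E); that is, M(K_4) dismantles to M(K_3). -/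
theorem wt_r : ∀ x : Fin 4 → ZMod 2, wt x = 2 → x 3 = 1 →
    wt (x + fun _ => 1) = 2 ∧ (x + fun _ => 1 : Fin 4 → ZMod 2) 3 = 0 := by decide

theorem wt_add : ∀ a b : Fin 4 → ZMod 2, wt a = 2 → a 3 = 1 → wt b = 2 → b 3 = 1 → a ≠ b →
    wt (a + b) = 2 := by
  set_option maxRecDepth 100000 in decide

theorem z2 : ∀ x : ZMod 2, x ≠ 1 → x = 0 := by decide

theorem tri_circuit (E : Finset (Fin 4 → ZMod 2)) (a b : Fin 4 → ZMod 2)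
    (ha : a ∈ E) (hb : b ∈ E) (hc : a + b ∈ E) (ha0 : a ≠ 0) (hb0 : b ≠ 0) (hab : a ≠ b) :
    IsCircuit E {a, b, a + b} := by
  have h2 : ∀ x : Fin 4 → ZMod 2, x + x = 0 := by
    intro x; ext i; exact CharTwo.add_self_eq_zero _
  have hac : a ≠ a + b := by simpa using hb0
  have hbc : b ≠ a + b := by simpa using ha0
  have hc0 : a + b ≠ 0 := by
    intro h
    apply hab
    have : a + b + b = b := by rw [h, zero_add]
    rwa [add_assoc, h2, add_zero] at this
  refine ⟨?_, ⟨a, by simp⟩, ?_, ?_⟩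
  · intro x hx
    simp only [Finset.mem_insert, Finset.mem_singleton] at hx
    rcases hx with rfl | rfl | rfl <;> assumption
  · rw [Finset.sum_insert (by simp [hab, hb0]), Finset.sum_insert (by simp [ha0]),
      Finset.sum_singleton, ← add_assoc, h2]
  · intro Z hZ hne hs
    have e : Z = ({a, b, a + b} : Finset _).filter (· ∈ Z) := by
      ext x
      simp only [Finset.mem_filter]
      exact ⟨fun h => ⟨hZ h, h⟩, fun h => h.2⟩
    have hs' : (if a ∈ Z then a else 0) + ((if b ∈ Z then b else 0) +
        (if a + b ∈ Z then a + b else 0)) = 0 := by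
      refine Eq.trans ?_ hs
      conv_rhs => rw [e]
      rw [Finset.sum_filter, Finset.sum_insert (by simp [hab, hb0]),
        Finset.sum_insert (by simp [ha0]), Finset.sum_singleton]
    have key : a ∈ Z ∧ b ∈ Z ∧ a + b ∈ Z := by
      obtain ⟨x, hx⟩ := hne
      have hx' := hZ hx
      simp only [Finset.mem_insert, Finset.mem_singleton] at hx'
      by_cases h1 : a ∈ Z <;> by_cases h3 : b ∈ Z <;> by_cases h4 : a + b ∈ Z <;>
        simp only [h1, h3, h4, if_true, if_false, zero_add, add_zero] at hs'
      · exact ⟨h1, h3, h4⟩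
      · exact absurd hs' hc0
      · rw [← add_assoc, h2, zero_add] at hs'; exact absurd hs' hb0
      · exact absurd hs' ha0
      · rw [add_comm a b, ← add_assoc, h2, zero_add] at hs'; exact absurd hs' ha0
      · exact absurd hs' hb0
      · exact absurd hs' hc0
      · rcases hx' with rfl | rfl | rfl <;> contradiction
    apply Finset.Subset.antisymm hZ
    intro x hx
    simp only [Finset.mem_insert, Finset.mem_singleton] at hx
    rcases hx with rfl | rfl | rfl
    exacts [key.1, key.2.1, key.2.2]

theorem stmt16 (E E' C : Finset (Fin 4 → ZMod 2))
    (hE : ∀ x, x ∈ E ↔ wt x = 2)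
    (hE' : ∀ x, x ∈ E' ↔ (wt x = 2 ∧ x 3 = 0))
    (hC : ∀ x, x ∈ C ↔ (wt x = 2 ∧ x 3 = 1))
    (r : (Fin 4 → ZMod 2) → (Fin 4 → ZMod 2))
    (hr : ∀ e, r e = if e ∈ C then e + (fun _ => 1) else e) :
    IsMHom E E r ∧ (∀ e ∈ E, r e ∈ E') ∧ (∀ e ∈ E', r e = e) ∧
      IsCocircuit E C ∧ MAdj E (id : (Fin 4 → ZMod 2) → (Fin 4 → ZMod 2)) r := by
  have hrC : ∀ e ∈ C, r e = e + fun _ => 1 := fun e h => by rw [hr, if_pos h]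
  have hrN : ∀ e, e ∉ C → r e = e := fun e h => by rw [hr, if_neg h]
  have hE3 : ∀ e ∈ E, e ∉ C → e 3 = 0 := fun e he h =>
    z2 _ fun h1 => h ((hC e).2 ⟨(hE e).1 he, h1⟩)
  have hrE' : ∀ e ∈ E, r e ∈ E' := by
    intro e he
    by_cases h : e ∈ C
    · rw [hrC e h, hE']
      exact wt_r e ((hC e).1 h).1 ((hC e).1 h).2
    · rw [hrN e h, hE']
      exact ⟨(hE e).1 he, hE3 e he h⟩
  have h3 : ∀ Z, IsCircuit E Z → ∑ e ∈ Z, e 3 = 0 := by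
    intro Z hZ
    have := congrFun hZ.2.2.1 3
    simpa using this
  have hCo : IsCocircuit E C := by
    refine ⟨fun x hx => (hE x).2 ((hC x).1 hx).1,
      ⟨![1, 0, 0, 1], (hC _).2 (by decide)⟩, ?_, ?_⟩
    · intro Z hZ
      rw [← ZMod.natCast_eq_zero_iff_even, ← h3 Z hZ, Finset.inter_comm,
        ← Finset.filter_mem_eq_inter, Finset.card_filter, Nat.cast_sum]
      apply Finset.sum_congr rfl
      intro e he
      by_cases h : e ∈ C
      · simp [h, ((hC e).1 h).2]
      · simp [h, hE3 e (hZ.1 he) h]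
    · intro D hD hne hev
      apply Finset.Subset.antisymm hD
      obtain ⟨a, ha⟩ := hne
      intro b hb
      by_contra hbD
      have hab : a ≠ b := fun h => hbD (h ▸ ha)
      obtain ⟨wa, a3⟩ := (hC a).1 (hD ha)
      obtain ⟨wb, b3⟩ := (hC b).1 hb
      have hc3 : (a + b) 3 = 0 := by rw [Pi.add_apply, a3, b3]; decide
      have hcD : a + b ∉ D := fun h => by
        have := ((hC _).1 (hD h)).2
        rw [hc3] at this
        exact absurd this (by decide)
      have a0 : a ≠ 0 := by rintro rfl; exact absurd a3 (by decide)
      have b0 : b ≠ 0 := by rintro rfl; exact absurd b3 (by decide)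
      have := hev _ (tri_circuit E a b ((hE a).2 wa) ((hE b).2 wb)
        ((hE _).2 (wt_add a b wa a3 wb b3 hab)) a0 b0 hab)
      have e : D ∩ {a, b, a + b} = {a} := by
        ext x
        simp only [Finset.mem_inter, Finset.mem_insert, Finset.mem_singleton]
        constructor
        · rintro ⟨hx, rfl | rfl | rfl⟩
          · rfl
          · exact absurd hx hbD
          · exact absurd hx hcD
        · rintro rfl; exact ⟨ha, Or.inl rfl⟩
      rw [e] at this
      simp at this
  refine ⟨⟨fun e he => (hE _).2 ((hE' _).1 (hrE' e he)).1, ?_⟩, hrE', ?_, hCo, C, hCo, ?_⟩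
  · intro Z hZ
    have : ∀ e ∈ Z, r e = e + fun _ => e 3 := by
      intro e he
      by_cases h : e ∈ C
      · rw [hrC e h, ((hC e).1 h).2]
      · rw [hrN e h, hE3 e (hZ.1 he) h]
        ext i; simp
    rw [Finset.sum_congr rfl this, Finset.sum_add_distrib, hZ.2.2.1, zero_add]
    ext i
    rw [Finset.sum_apply]
    exact h3 Z hZ
  · intro e he
    apply hrN
    intro h
    have h1 := ((hC e).1 h).2
    rw [((hE' e).1 he).2] at h1
    exact absurd h1 (by decide)
  · intro e he
    constructor
    · intro h
      by_contra hn
      exact h (hrN e hn).symm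
    · intro h heq
      rw [hrC e h] at heq
      have := congrFun heq 0
      simp at this
end

section
/- Let E = {𝟙_i + 𝟙_{i+1 mod 5} : i ∈ Fin 5} ⊆ (Fin 5 → ZMod 2) be the point set of the graphic matroid M(C_5) and let F be the set of the three nonzero vectors of (Fin 2 → ZMod 2), the point set of M(K_3). Then there are exactly 60 matroid homomorphisms from E to F, and any two of them are joined by a walk in the recolouring graph mCol(E, F); that is, mCol(M(C_5), M(K_3)) is connected. -/
abbrev V2 := Fin 2 → ZMod 2

def pt (i : Fin 5) : Fin 5 → ZMod 2 := ind i + ind (i + 1)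

abbrev Good (c : Fin 5 → V2) : Prop := (∀ i, c i ≠ 0) ∧ ∑ i, c i = 0

def base5 : Fin 5 → V2 := ![![1, 0], ![1, 0], ![1, 0], ![0, 1], ![1, 1]]

def dist5 (c : Fin 5 → V2) : ℕ := (Finset.univ.filter fun i => c i ≠ base5 i).card

def move5 (c : Fin 5 → V2) (i j : Fin 5) (d : V2) : Fin 5 → V2 :=
  fun k => if k = i ∨ k = j then c k + d else c k

lemma good_base : Good base5 := by decide +kernel

lemma good_card : (Finset.univ.filter fun c : Fin 5 → V2 => Good c).card = 60 := by
  decide +kernel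

lemma good_move : ∀ c : Fin 5 → V2, Good c → c ≠ base5 →
    ∃ i j : Fin 5, ∃ d : V2, i ≠ j ∧ d ≠ 0 ∧ Good (move5 c i j d) ∧
      dist5 (move5 c i j d) < dist5 c := by
  unfold dist5 move5
  decide +kernel

lemma pt_inj : Function.Injective pt := by
  have : ∀ i j, pt i = pt j → i = j := by decide +kernel
  exact fun i j => this i j

lemma pt_sum : ∑ i, pt i = 0 := by decide +kernel

lemma pt_indep : ∀ s : Finset (Fin 5), s.Nonempty → ∑ i ∈ s, pt i = 0 → s = Finset.univ := by
  decide +kernel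

lemma circuit_iff {E : Finset (Fin 5 → ZMod 2)} (hE : E = Finset.univ.image pt)
    (Z : Finset (Fin 5 → ZMod 2)) : IsCircuit E Z ↔ Z = E := by
  have key : ∀ Z ⊆ E, Z.Nonempty → ∑ e ∈ Z, e = 0 → Z = E := by
    intro Z hZ hne h0
    subst hE
    obtain ⟨s, -, rfl⟩ := Finset.subset_image_iff.1 hZ
    rw [Finset.sum_image (pt_inj.injOn)] at h0
    rw [pt_indep s (Finset.image_nonempty.1 hne) h0]
  constructor
  · rintro ⟨h1, h2, h3, -⟩
    exact key Z h1 h2 h3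
  · rintro rfl
    refine ⟨subset_rfl, ?_, ?_, key⟩
    · subst hE; simp
    · subst hE
      rw [Finset.sum_image (pt_inj.injOn)]
      exact pt_sum

lemma mhom_iff {E : Finset (Fin 5 → ZMod 2)} {F : Finset V2} (hE : E = Finset.univ.image pt)
    (hF : ∀ x, x ∈ F ↔ x ≠ 0) (τ : (Fin 5 → ZMod 2) → V2) :
    IsMHom E F τ ↔ Good (fun i => τ (pt i)) := by
  unfold IsMHom Good
  simp only [circuit_iff hE, hF]
  rw [forall_eq]
  subst hE
  rw [Finset.sum_image (pt_inj.injOn)]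
  simp

lemma cocircuit_pair {E : Finset (Fin 5 → ZMod 2)} (hE : E = Finset.univ.image pt)
    {i j : Fin 5} (hij : i ≠ j) : IsCocircuit E {pt i, pt j} := by
  have hsub : ({pt i, pt j} : Finset (Fin 5 → ZMod 2)) ⊆ E := by
    subst hE
    intro x hx
    simp only [Finset.mem_insert, Finset.mem_singleton] at hx
    rcases hx with rfl | rfl <;> simp
  have hc : ({pt i, pt j} : Finset (Fin 5 → ZMod 2)).card = 2 :=
    Finset.card_pair (fun h => hij (pt_inj h))
  refine ⟨hsub, by simp, ?_, ?_⟩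
  · intro Z hZ
    rw [circuit_iff hE] at hZ
    subst hZ
    rw [Finset.inter_eq_left.2 hsub, hc]
    exact even_two
  · intro C' hC' hne h
    have h1 := h E ((circuit_iff hE E).2 rfl)
    rw [Finset.inter_eq_left.2 (hC'.trans hsub)] at h1
    apply Finset.eq_of_subset_of_card_le hC'
    have := hne.card_pos
    obtain ⟨k, hk⟩ := h1
    omega

lemma mstep_symm {E : Finset (Fin 5 → ZMod 2)} {F : Finset V2} :
    Std.Symm (MStep E F : ((Fin 5 → ZMod 2) → V2) → _ → Prop) := by
  constructor
  rintro a b ⟨h1, h2, h3⟩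
  refine ⟨h2, h1, ?_⟩
  rcases h3 with h3 | ⟨C, hC, h⟩
  · exact Or.inl fun e he => (h3 e he).symm
  · exact Or.inr ⟨C, hC, fun e he => by rw [← h e he, ne_comm]⟩

lemma walk_base {E : Finset (Fin 5 → ZMod 2)} {F : Finset V2} (hE : E = Finset.univ.image pt)
    (hF : ∀ x, x ∈ F ↔ x ≠ 0) (n : ℕ) : ∀ τ : (Fin 5 → ZMod 2) → V2, IsMHom E F τ →
    dist5 (fun i => τ (pt i)) = n → MWalk E F τ (Function.extend pt base5 0) := by
  induction n using Nat.strong_induction_on with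
  | _ n ih =>
    intro τ hτ hn
    have hg := (mhom_iff hE hF τ).1 hτ
    have ext : ∀ c : Fin 5 → V2, (fun i => Function.extend pt c 0 (pt i)) = c := by
      intro c; funext i; exact pt_inj.extend_apply _ _ _
    by_cases hb : (fun i => τ (pt i)) = base5
    · apply Relation.ReflTransGen.single
      refine ⟨hτ, (mhom_iff hE hF _).2 (by rw [ext]; exact good_base), Or.inl ?_⟩
      intro e he
      rw [hE] at he
      obtain ⟨i, -, rfl⟩ := Finset.mem_image.1 he
      rw [pt_inj.extend_apply, ← hb]
    · obtain ⟨i, j, d, hij, hd, hgm, hlt⟩ := good_move _ hg hb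
      set c' := move5 (fun i => τ (pt i)) i j d with hc'
      have hm : IsMHom E F (Function.extend pt c' 0) :=
        (mhom_iff hE hF _).2 (by rw [ext]; exact hgm)
      refine Relation.ReflTransGen.head ?_
        (ih (dist5 c') (hn ▸ hlt) (Function.extend pt c' 0) hm (by rw [ext]))
      refine ⟨hτ, hm, Or.inr ⟨_, cocircuit_pair hE hij, ?_⟩⟩
      intro e he
      rw [hE] at he
      obtain ⟨k, -, rfl⟩ := Finset.mem_image.1 he
      rw [pt_inj.extend_apply, hc']
      simp only [move5, Finset.mem_insert, Finset.mem_singleton, pt_inj.eq_iff]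
      split_ifs with h
      · simp [h, hd]
      · simp [h]

theorem stmt18 (E : Finset (Fin 5 → ZMod 2)) (F : Finset (Fin 2 → ZMod 2))
    (hE : ∀ x, x ∈ E ↔ ∃ i : Fin 5, x = ind i + ind (i + 1))
    (hF : ∀ x, x ∈ F ↔ x ≠ 0) :
    Nat.card {g : {x // x ∈ E} → (Fin 2 → ZMod 2) //
        ∃ τ : (Fin 5 → ZMod 2) → (Fin 2 → ZMod 2),
          IsMHom E F τ ∧ ∀ e : {x // x ∈ E}, g e = τ e.1} = 60 ∧
    ∀ τ σ : (Fin 5 → ZMod 2) → (Fin 2 → ZMod 2),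
      IsMHom E F τ → IsMHom E F σ → MWalk E F τ σ := by
  have hE' : E = Finset.univ.image pt := by
    ext x
    rw [hE]
    simp [pt, eq_comm]
  have hmem : ∀ i, pt i ∈ E := fun i => (hE _).2 ⟨i, rfl⟩
  constructor
  · let f : Fin 5 ≃ {x // x ∈ E} := Equiv.ofBijective (fun i => ⟨pt i, hmem i⟩) (by
      constructor
      · intro i j h
        exact pt_inj (congrArg Subtype.val h)
      · rintro ⟨x, hx⟩
        obtain ⟨i, rfl⟩ := (hE x).1 hx
        exact ⟨i, rfl⟩)
    have e : {g : {x // x ∈ E} → (Fin 2 → ZMod 2) //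
        ∃ τ : (Fin 5 → ZMod 2) → (Fin 2 → ZMod 2),
          IsMHom E F τ ∧ ∀ e : {x // x ∈ E}, g e = τ e.1} ≃ {c : Fin 5 → V2 // Good c} := by
      refine Equiv.subtypeEquiv (f.symm.arrowCongr (Equiv.refl _)) ?_
      intro g
      have hfg : (f.symm.arrowCongr (Equiv.refl V2)) g = fun i => g ⟨pt i, hmem i⟩ := rfl
      rw [hfg]
      constructor
      · rintro ⟨τ, h, h'⟩
        have := (mhom_iff hE' hF τ).1 h
        simpa only [h'] using this
      · intro h
        refine ⟨Function.extend Subtype.val g 0, (mhom_iff hE' hF _).2 ?_, ?_⟩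
        · have : (fun i => Function.extend Subtype.val g 0 (pt i))
              = fun i => g ⟨pt i, hmem i⟩ := by
            funext i
            exact Subtype.val_injective.extend_apply g 0 ⟨pt i, hmem i⟩
          rw [this]; exact h
        · intro e
          exact (Subtype.val_injective.extend_apply g 0 e).symm
    rw [Nat.card_congr e, Nat.card_eq_fintype_card, Fintype.card_subtype]
    exact good_card
  · intro τ σ hτ hσ
    have h1 := walk_base hE' hF _ τ hτ rfl
    have h2 := walk_base hE' hF _ σ hσ rfl
    have := @mstep_symm E F
    exact Relation.ReflTransGen.trans h1 (Relation.ReflTransGen.stdSymm.symm _ _ h2)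
end
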